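/- Let μ ≥ 1 be an integer and let p : [0,∞) → ℝ^ℕ be the solution of the mean-field ODE system d/dt p_n(t) = 𝓛[p(t)]_n with p(0) ∈ V_μ and p(t) ∈ V_μ for every t ≥ 0. Then for every t ≥ 0, W₁(p(t), p*) ≤ 2·μ·e^{−t}, where p* is the Poisson distribution with mean μ and W₁ is the Wasserstein-1 distance on ℕ. -/

import Mathlib

/-!
Write `e t = p t - p*` and `E n t = ∑ k < n, e t k`. The generator is in divergence form, so `E`
satisfies `E (n + 1)' = (n + 1) (E (n + 2) - E (n + 1)) - μ (E (n + 1) - E n)` with `E 0 = 0`.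
Since the right derivative of `|f|` is at most `|f' + c f| - c |f|`, the sequence `|E n|` satisfies
the same relation with `≤`. Summation by parts over `n < N` turns the growing death rate `n + 1`
into the decay rate `1`, at the price of a boundary term `N |E (N + 1)|`, which vanishes as `N → ∞`
because `p t` and `p*` have finite means. Hence `∑ |E (n + 1)|` contracts like `e ^ (-t)`. Coupling
through a common uniform variable bounds `W₁` by this sum, and initially the sum is at most the sum
of the two means, `2 μ`.
-/

open MeasureTheory ENNReal

noncomputable section

/-- The poor-biased generator: `𝓛[p]_0 = p_1 - μ p_0` and, for `n ≥ 1`,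
`𝓛[p]_n = (n+1) p_{n+1} + μ p_{n-1} - (n+μ) p_n`. -/
def gen (μ : ℝ) (p : ℕ → ℝ) : ℕ → ℝ
  | 0 => p 1 - μ * p 0
  | n + 1 => ((n : ℝ) + 2) * p (n + 2) + μ * p n - (((n : ℝ) + 1) + μ) * p (n + 1)

/-- `V_μ`: probability mass functions on `ℕ` with mean `μ`. -/
def memV (μ : ℝ) (p : ℕ → ℝ) : Prop :=
  (∀ n, 0 ≤ p n) ∧ (∑' n : ℕ, p n = 1) ∧ (∑' n : ℕ, (n : ℝ) * p n = μ)

/-- The Wasserstein-1 distance (valued in `ℝ≥0∞`) between two measures on `ℕ`. -/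
def W1nat (π₁ π₂ : Measure ℕ) : ℝ≥0∞ :=
  ⨅ (π : Measure (ℕ × ℕ)) (_ : π.map Prod.fst = π₁) (_ : π.map Prod.snd = π₂),
    ∫⁻ z, (Nat.dist z.1 z.2 : ℝ≥0∞) ∂π

/-- The measure on `ℕ` associated with a (sub-)probability mass function `p`. -/
def seqMeas (p : ℕ → ℝ) : Measure ℕ :=
  Measure.sum (fun n : ℕ => ENNReal.ofReal (p n) • Measure.dirac n)

/-- The Poisson distribution with mean `μ` as a measure on `ℕ`. -/
def poissonMeas (μ : ℝ) : Measure ℕ :=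
  seqMeas (fun n => μ ^ n * Real.exp (-μ) / n.factorial)

/-- Cumulative sums of a sequence. With the strict upper bound, `cumul q n = P(X < n)` when `q` is
the law of `X`, so the distribution function at `n` is `cumul q (n + 1)`. -/
def cumul (q : ℕ → ℝ) (n : ℕ) : ℝ := ∑ k ∈ Finset.range n, q k

section Cumul

variable {q : ℕ → ℝ}

lemma cumul_zero (q : ℕ → ℝ) : cumul q 0 = 0 := Finset.sum_range_zero q

lemma cumul_succ (q : ℕ → ℝ) (n : ℕ) : cumul q (n + 1) = cumul q n + q n :=
  Finset.sum_range_succ q n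

lemma cumul_sub (q r : ℕ → ℝ) (n : ℕ) : cumul (q - r) n = cumul q n - cumul r n :=
  Finset.sum_sub_distrib q r

lemma monotone_cumul (hq : ∀ n, 0 ≤ q n) : Monotone (cumul q) :=
  fun _ _ hmn => Finset.sum_le_sum_of_subset_of_nonneg (Finset.range_mono hmn) fun k _ _ => hq k

lemma cumul_nonneg (hq : ∀ n, 0 ≤ q n) (n : ℕ) : 0 ≤ cumul q n :=
  Finset.sum_nonneg fun k _ => hq k

lemma cumul_le {a : ℝ} (hq : ∀ n, 0 ≤ q n) (hsum : HasSum q a) (n : ℕ) : cumul q n ≤ a :=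
  sum_le_hasSum _ (fun k _ => hq k) hsum

end Cumul

section Coupling

variable {q r : ℕ → ℝ} {u : ℝ}

/-- The quantile function of the law `q`: the least `n` whose distribution function exceeds `u`.
It is meaningful for `u ∈ [0, 1)`; for larger `u` the infimum is over `∅`, hence `0`. -/
def quantile (q : ℕ → ℝ) (u : ℝ) : ℕ := sInf {n | u < cumul q (n + 1)}

lemma le_quantile_iff (hq : ∀ n, 0 ≤ q n) (hq1 : HasSum q 1) (hu : u ∈ Set.Ico 0 1) {n : ℕ} :
    n ≤ quantile q u ↔ cumul q n ≤ u := by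
  constructor
  · intro hn
    cases n with
    | zero => exact (cumul_zero q).trans_le hu.1
    | succ k => exact not_lt.1 fun hk => hn.not_gt (Nat.lt_succ_of_le (Nat.sInf_le hk))
  · intro hn
    have hex : ∃ k, u < cumul q (k + 1) :=
      ((hq1.tendsto_sum_nat.comp (Filter.tendsto_add_atTop_nat 1)).eventually_const_lt hu.2).exists
    exact le_csInf hex fun k hk =>
      not_lt.1 fun hkn => (hn.trans_lt hk).not_ge (monotone_cumul hq hkn)

lemma quantile_eq_iff (hq : ∀ n, 0 ≤ q n) (hq1 : HasSum q 1) (hu : u ∈ Set.Ico 0 1) {n : ℕ} :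
    quantile q u = n ↔ u ∈ Set.Ico (cumul q n) (cumul q (n + 1)) := by
  rw [Set.mem_Ico, ← le_quantile_iff hq hq1 hu, ← not_le, ← le_quantile_iff hq hq1 hu]
  omega

lemma monotoneOn_quantile (hq : ∀ n, 0 ≤ q n) (hq1 : HasSum q 1) :
    MonotoneOn (quantile q) (Set.Ico 0 1) :=
  fun _ hu _ hv huv =>
    (le_quantile_iff hq hq1 hv).2 (((le_quantile_iff hq hq1 hu).1 le_rfl).trans huv)

lemma aemeasurable_quantile (hq : ∀ n, 0 ≤ q n) (hq1 : HasSum q 1) :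
    AEMeasurable (quantile q) (volume.restrict (Set.Ico 0 1)) :=
  aemeasurable_restrict_of_monotoneOn measurableSet_Ico (monotoneOn_quantile hq hq1)

lemma map_quantile (hq : ∀ n, 0 ≤ q n) (hq1 : HasSum q 1) :
    (volume.restrict (Set.Ico 0 1)).map (quantile q) = seqMeas q := by
  refine Measure.ext_of_singleton fun n => ?_
  have hfiber : quantile q ⁻¹' {n} ∩ Set.Ico 0 1 = Set.Ico (cumul q n) (cumul q (n + 1)) := by
    ext u
    refine ⟨fun ⟨hn, hu⟩ => (quantile_eq_iff hq hq1 hu).1 hn, fun hn => ?_⟩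
    have hu : u ∈ Set.Ico (0 : ℝ) 1 :=
      ⟨(cumul_nonneg hq n).trans hn.1, hn.2.trans_le (cumul_le hq hq1 _)⟩
    exact ⟨(quantile_eq_iff hq hq1 hu).2 hn, hu⟩
  rw [Measure.map_apply_of_aemeasurable (aemeasurable_quantile hq hq1) (measurableSet_singleton n),
    Measure.restrict_apply' measurableSet_Ico, hfiber, Real.volume_Ico, cumul_succ,
    add_sub_cancel_left, seqMeas, Measure.sum_smul_dirac_singleton]

lemma natCast_dist_eq_tsum_indicator (a b : ℕ) :
    (Nat.dist a b : ℝ≥0∞) = ∑' n, (Set.Ico (min a b) (max a b)).indicator 1 n := by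
  have hcard : Nat.dist a b = (Finset.Ico (min a b) (max a b)).card := by
    rw [Nat.card_Ico, Nat.dist]
    omega
  rw [← Finset.coe_Ico, ← sum_eq_tsum_indicator, hcard]
  simp only [Pi.one_apply, Finset.sum_const, nsmul_eq_mul, mul_one]

lemma mem_Ico_quantile_iff (hq : ∀ n, 0 ≤ q n) (hq1 : HasSum q 1) (hr : ∀ n, 0 ≤ r n)
    (hr1 : HasSum r 1) (hu : u ∈ Set.Ico 0 1) {n : ℕ} :
    n ∈ Set.Ico (min (quantile q u) (quantile r u)) (max (quantile q u) (quantile r u)) ↔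
      u ∈ Set.Ico (min (cumul q (n + 1)) (cumul r (n + 1)))
        (max (cumul q (n + 1)) (cumul r (n + 1))) := by
  simp only [Set.mem_Ico, min_le_iff, lt_max_iff, ← not_le (a := cumul q (n + 1)),
    ← not_le (a := cumul r (n + 1)), ← le_quantile_iff hq hq1 hu, ← le_quantile_iff hr hr1 hu]
  omega

lemma lintegral_dist_quantile_le (hq : ∀ n, 0 ≤ q n) (hq1 : HasSum q 1) (hr : ∀ n, 0 ≤ r n)
    (hr1 : HasSum r 1) :
    ∫⁻ u in Set.Ico 0 1, (Nat.dist (quantile q u) (quantile r u) : ℝ≥0∞) ≤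
      ∑' n, ENNReal.ofReal |cumul q (n + 1) - cumul r (n + 1)| := by
  let A (n : ℕ) : Set ℝ := Set.Ico (min (cumul q (n + 1)) (cumul r (n + 1)))
    (max (cumul q (n + 1)) (cumul r (n + 1)))
  have hA (n : ℕ) : MeasurableSet (A n) := measurableSet_Ico
  have hdist (u : ℝ) (hu : u ∈ Set.Ico (0 : ℝ) 1) :
      (Nat.dist (quantile q u) (quantile r u) : ℝ≥0∞) = ∑' n, (A n).indicator 1 u := by
    rw [natCast_dist_eq_tsum_indicator]
    classical
    refine tsum_congr fun n => ?_
    simp only [Set.indicator_apply, mem_Ico_quantile_iff hq hq1 hr hr1 hu, A, Pi.one_apply]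
  calc ∫⁻ u in Set.Ico 0 1, (Nat.dist (quantile q u) (quantile r u) : ℝ≥0∞)
      = ∫⁻ u in Set.Ico 0 1, ∑' n, (A n).indicator 1 u :=
        setLIntegral_congr_fun measurableSet_Ico hdist
    _ ≤ ∫⁻ u, ∑' n, (A n).indicator 1 u := setLIntegral_le_lintegral _ _
    _ = ∑' n, ∫⁻ u, (A n).indicator 1 u :=
        lintegral_tsum fun n => (measurable_one.indicator (hA n)).aemeasurable
    _ = ∑' n, ENNReal.ofReal |cumul q (n + 1) - cumul r (n + 1)| :=
        tsum_congr fun n => by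
          rw [lintegral_indicator_one (hA n), Real.volume_Ico, max_sub_min_eq_abs, abs_sub_comm]

theorem W1nat_seqMeas_le_tsum (hq : ∀ n, 0 ≤ q n) (hq1 : HasSum q 1) (hr : ∀ n, 0 ≤ r n)
    (hr1 : HasSum r 1) :
    W1nat (seqMeas q) (seqMeas r) ≤
      ∑' n, ENNReal.ofReal |cumul q (n + 1) - cumul r (n + 1)| := by
  have hX := aemeasurable_quantile hq hq1
  have hY := aemeasurable_quantile hr hr1
  have hXY := hX.prodMk hY
  refine iInf₂_le_of_le ((volume.restrict (Set.Ico 0 1)).map fun u => (quantile q u, quantile r u))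
    ?_ (iInf_le_of_le ?_ ?_)
  · rw [AEMeasurable.map_map_of_aemeasurable measurable_fst.aemeasurable hXY]
    exact map_quantile hq hq1
  · rw [AEMeasurable.map_map_of_aemeasurable measurable_snd.aemeasurable hXY]
    exact map_quantile hr hr1
  · rw [lintegral_map' (measurable_of_countable _).aemeasurable hXY]
    exact lintegral_dist_quantile_le hq hq1 hr hr1

end Coupling

lemma hasSum_of_tsum_eq {ι M : Type*} [AddCommMonoid M] [TopologicalSpace M] {f : ι → M} {a : M}
    (ha : a ≠ 0) (h : ∑' i, f i = a) : HasSum f a := by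
  have hf : Summable f := by
    by_contra hf
    exact ha (h.symm.trans (tsum_eq_zero_of_not_summable hf))
  exact h ▸ hf.hasSum

/-- `q` is a probability mass function on `ℕ` with mean `m`. Unlike `memV`, where a divergent series
has the junk sum `0`, this asserts that both series converge. -/
structure IsPMFWithMean (q : ℕ → ℝ) (m : ℝ) : Prop where
  nonneg : ∀ n, 0 ≤ q n
  hasSum_one : HasSum q 1
  hasSum_mean : HasSum (fun n : ℕ => (n : ℝ) * q n) m

lemma memV.isPMFWithMean {q : ℕ → ℝ} {m : ℝ} (hm : m ≠ 0) (hq : memV m q) :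
    IsPMFWithMean q m where
  nonneg := hq.1
  hasSum_one := hasSum_of_tsum_eq one_ne_zero hq.2.1
  hasSum_mean := hasSum_of_tsum_eq hm hq.2.2

namespace IsPMFWithMean

variable {q r : ℕ → ℝ} {m m' : ℝ}

lemma tail_nonneg (hq : IsPMFWithMean q m) (n : ℕ) : 0 ≤ 1 - cumul q n :=
  sub_nonneg.2 (cumul_le hq.nonneg hq.hasSum_one n)

lemma mul_tail_le_mean_sub (hq : IsPMFWithMean q m) (N : ℕ) :
    N * (1 - cumul q (N + 1)) ≤ m - ∑ k ∈ Finset.range (N + 1), (k : ℝ) * q k := by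
  have htail := ((hasSum_nat_add_iff' (N + 1)).2 hq.hasSum_one).mul_left (N : ℝ)
  refine hasSum_le (fun k => ?_) htail ((hasSum_nat_add_iff' (N + 1)).2 hq.hasSum_mean)
  exact mul_le_mul_of_nonneg_right (by exact_mod_cast (by omega : N ≤ k + (N + 1))) (hq.nonneg _)

lemma mul_tail_le_mean (hq : IsPMFWithMean q m) (N : ℕ) : N * (1 - cumul q (N + 1)) ≤ m :=
  (hq.mul_tail_le_mean_sub N).trans <| sub_le_self _ <|
    Finset.sum_nonneg fun k _ => mul_nonneg k.cast_nonneg (hq.nonneg k)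

lemma tendsto_mul_tail (hq : IsPMFWithMean q m) :
    Filter.Tendsto (fun N : ℕ => N * (1 - cumul q (N + 1))) Filter.atTop (nhds 0) := by
  have hrest := (hq.hasSum_mean.tendsto_sum_nat.comp (Filter.tendsto_add_atTop_nat 1)).const_sub m
  rw [sub_self] at hrest
  exact squeeze_zero (fun N => mul_nonneg N.cast_nonneg (hq.tail_nonneg _))
    hq.mul_tail_le_mean_sub hrest

lemma hasSum_tail (hq : IsPMFWithMean q m) : HasSum (fun n => 1 - cumul q (n + 1)) m := by
  have hparts (N : ℕ) : ∑ n ∈ Finset.range N, (1 - cumul q (n + 1)) =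
      ∑ k ∈ Finset.range (N + 1), (k : ℝ) * q k + N * (1 - cumul q (N + 1)) := by
    induction N with
    | zero => simp
    | succ N ih =>
      rw [Finset.sum_range_succ, ih, Finset.sum_range_succ _ (N + 1), cumul_succ q (N + 1)]
      push_cast
      ring
  rw [hasSum_iff_tendsto_nat_of_nonneg fun n => hq.tail_nonneg (n + 1), funext hparts]
  simpa only [add_zero, Function.comp_def] using
    (hq.hasSum_mean.tendsto_sum_nat.comp (Filter.tendsto_add_atTop_nat 1)).add hq.tendsto_mul_tail

lemma abs_cumul_sub_le (hq : IsPMFWithMean q m) (hr : IsPMFWithMean r m') (n : ℕ) :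
    |cumul (q - r) n| ≤ (1 - cumul q n) + (1 - cumul r n) := by
  rw [cumul_sub, abs_le]
  constructor <;> linarith [hq.tail_nonneg n, hr.tail_nonneg n]

lemma mul_abs_cumul_sub_le (hq : IsPMFWithMean q m) (hr : IsPMFWithMean r m') (N : ℕ) :
    N * |cumul (q - r) (N + 1)| ≤ N * (1 - cumul q (N + 1)) + N * (1 - cumul r (N + 1)) := by
  rw [← mul_add]
  exact mul_le_mul_of_nonneg_left (hq.abs_cumul_sub_le hr _) N.cast_nonneg

lemma mul_abs_cumul_sub_le_add (hq : IsPMFWithMean q m) (hr : IsPMFWithMean r m') (N : ℕ) :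
    N * |cumul (q - r) (N + 1)| ≤ m + m' :=
  (hq.mul_abs_cumul_sub_le hr N).trans (add_le_add (hq.mul_tail_le_mean N) (hr.mul_tail_le_mean N))

lemma tendsto_mul_abs_cumul_sub (hq : IsPMFWithMean q m) (hr : IsPMFWithMean r m') :
    Filter.Tendsto (fun N : ℕ => N * |cumul (q - r) (N + 1)|) Filter.atTop (nhds 0) :=
  squeeze_zero (fun N => mul_nonneg N.cast_nonneg (abs_nonneg _)) (hq.mul_abs_cumul_sub_le hr)
    (by simpa only [add_zero] using hq.tendsto_mul_tail.add hr.tendsto_mul_tail)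

lemma summable_abs_cumul_sub (hq : IsPMFWithMean q m) (hr : IsPMFWithMean r m') :
    Summable fun n => |cumul (q - r) (n + 1)| :=
  .of_nonneg_of_le (fun _ => abs_nonneg _) (fun n => hq.abs_cumul_sub_le hr (n + 1))
    (hq.hasSum_tail.add hr.hasSum_tail).summable

lemma tsum_abs_cumul_sub_le (hq : IsPMFWithMean q m) (hr : IsPMFWithMean r m') :
    ∑' n, |cumul (q - r) (n + 1)| ≤ m + m' :=
  hasSum_le (fun n => hq.abs_cumul_sub_le hr (n + 1)) (hq.summable_abs_cumul_sub hr).hasSum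
    (hq.hasSum_tail.add hr.hasSum_tail)

lemma W1nat_le_ofReal_tsum (hq : IsPMFWithMean q m) (hr : IsPMFWithMean r m') :
    W1nat (seqMeas q) (seqMeas r) ≤ ENNReal.ofReal (∑' n, |cumul (q - r) (n + 1)|) := by
  rw [ENNReal.ofReal_tsum_of_nonneg (fun _ => abs_nonneg _) (hq.summable_abs_cumul_sub hr)]
  simpa only [cumul_sub] using
    W1nat_seqMeas_le_tsum hq.nonneg hq.hasSum_one hr.nonneg hr.hasSum_one

end IsPMFWithMean

section Poisson

variable {m : ℝ}

/-- The mass function of the Poisson distribution with mean `m`; its measure is `poissonMeas m`. -/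
def poissonMass (m : ℝ) (n : ℕ) : ℝ := m ^ n * Real.exp (-m) / n.factorial

lemma succ_mul_poissonMass_succ (m : ℝ) (n : ℕ) :
    ((n : ℝ) + 1) * poissonMass m (n + 1) = m * poissonMass m n := by
  simp only [poissonMass, Nat.factorial_succ, Nat.cast_mul, Nat.cast_succ, pow_succ]
  field_simp

lemma hasSum_poissonMass (hm : 0 ≤ m) : HasSum (poissonMass m) 1 := by
  have hcomm : poissonMass m = fun n => Real.exp (-m) * m ^ n / n.factorial :=
    funext fun n => by rw [poissonMass, mul_comm (m ^ n)]
  exact hcomm ▸ ProbabilityTheory.hasSum_one_poissonMeasure ⟨m, hm⟩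

lemma isPMFWithMean_poissonMass (hm : 0 ≤ m) : IsPMFWithMean (poissonMass m) m where
  nonneg n := by unfold poissonMass; positivity
  hasSum_one := hasSum_poissonMass hm
  hasSum_mean := by
    rw [← hasSum_nat_add_iff' 1]
    simpa [succ_mul_poissonMass_succ] using (hasSum_poissonMass hm).mul_left m

lemma gen_poissonMass (m : ℝ) : gen m (poissonMass m) = 0 := by
  ext n
  cases n with
  | zero =>
    have hrec := succ_mul_poissonMass_succ m 0
    simp only [Nat.cast_zero, zero_add, one_mul] at hrec
    simp [gen, hrec]
  | succ n =>
    have hrec := succ_mul_poissonMass_succ m n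
    have hrec' := succ_mul_poissonMass_succ m (n + 1)
    push_cast at hrec'
    simp only [gen, Pi.zero_apply]
    linear_combination hrec' - hrec

end Poisson

section Generator

lemma gen_sub (m : ℝ) (q r : ℕ → ℝ) : gen m (q - r) = gen m q - gen m r := by
  ext n
  cases n <;> simp only [gen, Pi.sub_apply] <;> ring

lemma cumul_gen (m : ℝ) (q : ℕ → ℝ) (n : ℕ) :
    cumul (gen m q) (n + 1) = ((n : ℝ) + 1) * (cumul q (n + 2) - cumul q (n + 1)) -
      m * (cumul q (n + 1) - cumul q n) := by
  induction n with
  | zero => simp [cumul, gen, Finset.sum_range_succ]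
  | succ n ih =>
    rw [cumul_succ, ih]
    simp only [gen, cumul_succ]
    push_cast
    ring

lemma sum_range_cumul_drift (m : ℝ) (a : ℕ → ℝ) (N : ℕ) :
    ∑ n ∈ Finset.range N, (((n : ℝ) + 1) * (a (n + 2) - a (n + 1)) - m * (a (n + 1) - a n)) =
      -∑ n ∈ Finset.range N, a (n + 1) + N * a (N + 1) - m * (a N - a 0) := by
  induction N with
  | zero => simp
  | succ N ih =>
    rw [Finset.sum_range_succ, ih, Finset.sum_range_succ]
    push_cast
    ring

end Generator

-- For `f' = g - c f` this says that the right derivative of `|f|` is at most `|g| - c |f|`.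
lemma exists_hasDerivWithinAt_abs {f : ℝ → ℝ} {f' x : ℝ}
    (hf : HasDerivWithinAt f f' (Set.Ioi x) x) :
    ∃ d, HasDerivWithinAt (fun y => |f y|) d (Set.Ioi x) x ∧
      ∀ c, d ≤ |f' + c * f x| - c * |f x| := by
  rcases lt_trichotomy (f x) 0 with hneg | hzero | hpos
  · refine ⟨-1 * f', (hasDerivAt_abs_neg hneg).comp_hasDerivWithinAt x hf, fun c => ?_⟩
    rw [abs_of_neg hneg]
    linarith [neg_le_abs (f' + c * f x)]
  · refine ⟨|f'|, ?_, fun c => by simp [hzero]⟩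
    rw [hasDerivWithinAt_iff_tendsto_slope' Set.self_notMem_Ioi] at hf ⊢
    refine hf.abs.congr' (eventually_nhdsWithin_of_forall fun y hy => ?_)
    rw [slope_def_field, slope_def_field, hzero, abs_zero, sub_zero, sub_zero, abs_div,
      abs_of_pos (sub_pos.2 hy)]
  · refine ⟨1 * f', (hasDerivAt_abs_pos hpos).comp_hasDerivWithinAt x hf, fun c => ?_⟩
    rw [abs_of_pos hpos]
    linarith [le_abs_self (f' + c * f x)]

/-- `p` solves the mean-field system `dp_n/dt = 𝓛[p]_n` on `[0, ∞)`. The system being linear, signed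
sequences are allowed: it is the difference of two laws that is followed in time. -/
def IsMeanFieldSolution (m : ℝ) (p : ℝ → ℕ → ℝ) : Prop :=
  ∀ t ∈ Set.Ici (0 : ℝ), ∀ n : ℕ,
    HasDerivWithinAt (fun s => p s n) (gen m (p t) n) (Set.Ici 0) t

namespace IsMeanFieldSolution

variable {m t C : ℝ} {p r e : ℝ → ℕ → ℝ}

lemma sub (hp : IsMeanFieldSolution m p) (hr : IsMeanFieldSolution m r) :
    IsMeanFieldSolution m (p - r) := fun t ht n => by
  rw [Pi.sub_apply, gen_sub]
  exact (hp t ht n).sub (hr t ht n)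

lemma const {q : ℕ → ℝ} (hq : gen m q = 0) : IsMeanFieldSolution m fun _ => q := fun t _ n => by
  rw [hq]
  exact hasDerivWithinAt_const t _ (q n)

lemma hasDerivWithinAt_cumul (he : IsMeanFieldSolution m e) (ht : 0 ≤ t) (n : ℕ) :
    HasDerivWithinAt (fun s => cumul (e s) n) (cumul (gen m (e t)) n) (Set.Ici 0) t :=
  HasDerivWithinAt.fun_sum fun k _ => he t ht k

lemma continuousOn_cumul (he : IsMeanFieldSolution m e) (n : ℕ) :
    ContinuousOn (fun s => cumul (e s) n) (Set.Ici 0) :=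
  fun _ hs => (he.hasDerivWithinAt_cumul hs n).continuousWithinAt

lemma exists_hasDerivWithinAt_abs_cumul (he : IsMeanFieldSolution m e) (hm : 0 ≤ m) (ht : 0 ≤ t)
    (n : ℕ) :
    ∃ d, HasDerivWithinAt (fun s => |cumul (e s) (n + 1)|) d (Set.Ioi t) t ∧
      d ≤ ((n : ℝ) + 1) * (|cumul (e t) (n + 2)| - |cumul (e t) (n + 1)|) -
        m * (|cumul (e t) (n + 1)| - |cumul (e t) n|) := by
  have hderiv := (he.hasDerivWithinAt_cumul ht (n + 1)).mono (Set.Ioi_subset_Ici ht)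
  obtain ⟨d, hd, hbound⟩ := exists_hasDerivWithinAt_abs hderiv
  refine ⟨d, hd, ?_⟩
  have hcancel : cumul (gen m (e t)) (n + 1) + ((n + 1 : ℝ) + m) * cumul (e t) (n + 1) =
      (n + 1 : ℝ) * cumul (e t) (n + 2) + m * cumul (e t) n := by
    rw [cumul_gen]
    ring
  have htriangle := abs_add_le ((n + 1 : ℝ) * cumul (e t) (n + 2)) (m * cumul (e t) n)
  rw [abs_mul, abs_mul, abs_of_nonneg hm, abs_of_nonneg (by positivity : (0 : ℝ) ≤ n + 1),
    ← hcancel] at htriangle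
  linarith [hbound ((n + 1 : ℝ) + m)]

lemma exists_hasDerivWithinAt_sum_abs_cumul (he : IsMeanFieldSolution m e) (hm : 0 ≤ m)
    (ht : 0 ≤ t) (N : ℕ) :
    ∃ d, HasDerivWithinAt (fun s => ∑ n ∈ Finset.range N, |cumul (e s) (n + 1)|) d
        (Set.Ioi t) t ∧
      ∑ n ∈ Finset.range N, |cumul (e t) (n + 1)| + d ≤ N * |cumul (e t) (N + 1)| := by
  choose d hd hbound using he.exists_hasDerivWithinAt_abs_cumul hm ht
  refine ⟨∑ n ∈ Finset.range N, d n, HasDerivWithinAt.fun_sum fun n _ => hd n, ?_⟩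
  have hsum := Finset.sum_le_sum fun n (_ : n ∈ Finset.range N) => hbound n
  rw [sum_range_cumul_drift m (fun n => |cumul (e t) n|), cumul_zero, abs_zero, sub_zero] at hsum
  linarith [mul_nonneg hm (abs_nonneg (cumul (e t) N))]

lemma exp_mul_sum_abs_cumul_sub_le_integral (he : IsMeanFieldSolution m e) (hm : 0 ≤ m)
    (ht : 0 ≤ t) (N : ℕ) :
    Real.exp t * ∑ n ∈ Finset.range N, |cumul (e t) (n + 1)| -
        ∑ n ∈ Finset.range N, |cumul (e 0) (n + 1)| ≤
      ∫ s in (0 : ℝ)..t, Real.exp s * (N * |cumul (e s) (N + 1)|) := by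
  let S (s : ℝ) : ℝ := ∑ n ∈ Finset.range N, |cumul (e s) (n + 1)|
  choose! d hd hbound using fun s hs => he.exists_hasDerivWithinAt_sum_abs_cumul hm (t := s) hs N
  have hcumul (n : ℕ) : ContinuousOn (fun s => cumul (e s) n) (Set.Icc 0 t) :=
    (he.continuousOn_cumul n).mono Set.Icc_subset_Ici_self
  have hcont : ContinuousOn (fun s => Real.exp s * S s) (Set.Icc 0 t) :=
    Real.continuous_exp.continuousOn.mul (continuousOn_finsetSum _ fun n _ => (hcumul _).abs)
  have hderiv (s : ℝ) (hs : s ∈ Set.Ioo 0 t) : HasDerivWithinAt (fun s => Real.exp s * S s)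
      (Real.exp s * S s + Real.exp s * d s) (Set.Ioi s) s :=
    (Real.hasDerivAt_exp s).hasDerivWithinAt.mul (hd s hs.1.le)
  have hint : IntegrableOn (fun s => Real.exp s * (N * |cumul (e s) (N + 1)|)) (Set.Icc 0 t) :=
    (Real.continuous_exp.continuousOn.mul
      (continuousOn_const.mul (hcumul _).abs)).integrableOn_Icc
  have hmain := intervalIntegral.sub_le_integral_of_hasDeriv_right_of_le ht hcont hderiv hint
    fun s hs => by
      rw [← mul_add]
      exact mul_le_mul_of_nonneg_left (hbound s hs.1.le) (Real.exp_pos s).le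
  simpa only [Real.exp_zero, one_mul] using hmain

lemma tendsto_integral_boundary (he : IsMeanFieldSolution m e)
    (hbound : ∀ s ∈ Set.Ici (0 : ℝ), ∀ N : ℕ, N * |cumul (e s) (N + 1)| ≤ C)
    (hlim : ∀ s ∈ Set.Ici (0 : ℝ),
      Filter.Tendsto (fun N : ℕ => N * |cumul (e s) (N + 1)|) Filter.atTop (nhds 0))
    (ht : 0 ≤ t) :
    Filter.Tendsto (fun N : ℕ => ∫ s in (0 : ℝ)..t, Real.exp s * (N * |cumul (e s) (N + 1)|))
      Filter.atTop (nhds 0) := by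
  have hnonneg {s : ℝ} (hs : s ∈ Set.uIoc 0 t) : s ∈ Set.Ici (0 : ℝ) :=
    (Set.uIoc_of_le ht ▸ hs).1.le
  have hmeas (N : ℕ) : AEStronglyMeasurable (fun s => Real.exp s * (N * |cumul (e s) (N + 1)|))
      (volume.restrict (Set.uIoc 0 t)) := by
    have hcont := (he.continuousOn_cumul (N + 1)).mono fun s hs => hnonneg hs
    exact (Real.continuous_exp.continuousOn.mul
      (continuousOn_const.mul hcont.abs)).aestronglyMeasurable measurableSet_uIoc
  have hdom (N : ℕ) (s : ℝ) (hs : s ∈ Set.uIoc 0 t) :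
      ‖Real.exp s * (N * |cumul (e s) (N + 1)|)‖ ≤ Real.exp s * C := by
    rw [Real.norm_of_nonneg (by positivity)]
    exact mul_le_mul_of_nonneg_left (hbound s (hnonneg hs) N) (Real.exp_pos s).le
  have hpointwise (s : ℝ) (hs : s ∈ Set.uIoc 0 t) := (hlim s (hnonneg hs)).const_mul (Real.exp s)
  simpa only [mul_zero, intervalIntegral.integral_zero] using
    intervalIntegral.tendsto_integral_filter_of_dominated_convergence (fun s => Real.exp s * C)
      (.of_forall hmeas) (.of_forall fun N => .of_forall (hdom N))
      (Continuous.intervalIntegrable (by fun_prop) 0 t) (.of_forall hpointwise)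

theorem tsum_abs_cumul_le (he : IsMeanFieldSolution m e) (hm : 0 ≤ m)
    (hbound : ∀ s ∈ Set.Ici (0 : ℝ), ∀ N : ℕ, N * |cumul (e s) (N + 1)| ≤ C)
    (hlim : ∀ s ∈ Set.Ici (0 : ℝ),
      Filter.Tendsto (fun N : ℕ => N * |cumul (e s) (N + 1)|) Filter.atTop (nhds 0))
    (hsum : ∀ s ∈ Set.Ici (0 : ℝ), Summable fun n => |cumul (e s) (n + 1)|) (ht : 0 ≤ t) :
    ∑' n, |cumul (e t) (n + 1)| ≤ Real.exp (-t) * ∑' n, |cumul (e 0) (n + 1)| := by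
  have hpartial (s : ℝ) (hs : 0 ≤ s) := (hsum s hs).hasSum.tendsto_sum_nat
  have hgrowth := le_of_tendsto_of_tendsto'
    (((hpartial t ht).const_mul (Real.exp t)).sub (hpartial 0 le_rfl))
    (he.tendsto_integral_boundary hbound hlim ht)
    (he.exp_mul_sum_abs_cumul_sub_le_integral hm ht)
  rwa [Real.exp_neg, le_inv_mul_iff₀ (Real.exp_pos t), ← sub_nonpos]

theorem tsum_abs_cumul_sub_le (hp : IsMeanFieldSolution m p) (hr : IsMeanFieldSolution m r)
    (hm : 0 ≤ m) (hpm : ∀ s ∈ Set.Ici (0 : ℝ), IsPMFWithMean (p s) m)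
    (hrm : ∀ s ∈ Set.Ici (0 : ℝ), IsPMFWithMean (r s) m) (ht : 0 ≤ t) :
    ∑' n, |cumul (p t - r t) (n + 1)| ≤
      Real.exp (-t) * ∑' n, |cumul (p 0 - r 0) (n + 1)| :=
  (hp.sub hr).tsum_abs_cumul_le hm
    (fun s hs => (hpm s hs).mul_abs_cumul_sub_le_add (hrm s hs))
    (fun s hs => (hpm s hs).tendsto_mul_abs_cumul_sub (hrm s hs))
    (fun s hs => (hpm s hs).summable_abs_cumul_sub (hrm s hs)) ht

end IsMeanFieldSolution

theorem meanfield_convergence_to_poisson_general {m : ℝ} (hm : 0 < m) (p : ℝ → ℕ → ℝ)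
    (hode : ∀ t ∈ Set.Ici (0 : ℝ), ∀ n : ℕ,
      HasDerivWithinAt (fun s => p s n) (gen m (p t) n) (Set.Ici 0) t)
    (hV : ∀ t ∈ Set.Ici (0 : ℝ), memV m (p t)) :
    ∀ t ∈ Set.Ici (0 : ℝ),
      W1nat (seqMeas (p t)) (poissonMeas m) ≤ ENNReal.ofReal (2 * m * Real.exp (-t)) := by
  intro t ht
  have hp (s : ℝ) (hs : s ∈ Set.Ici (0 : ℝ)) := (hV s hs).isPMFWithMean hm.ne'
  have hpoisson := isPMFWithMean_poissonMass hm.le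
  refine ((hp t ht).W1nat_le_ofReal_tsum hpoisson).trans (ENNReal.ofReal_le_ofReal ?_)
  have hsol : IsMeanFieldSolution m p := hode
  calc ∑' n, |cumul (p t - poissonMass m) (n + 1)|
      ≤ Real.exp (-t) * ∑' n, |cumul (p 0 - poissonMass m) (n + 1)| :=
        hsol.tsum_abs_cumul_sub_le (.const (gen_poissonMass m)) hm.le hp (fun _ _ => hpoisson) ht
    _ ≤ Real.exp (-t) * (m + m) :=
        mul_le_mul_of_nonneg_left ((hp 0 Set.self_mem_Ici).tsum_abs_cumul_sub_le hpoisson)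
          (Real.exp_pos _).le
    _ = 2 * m * Real.exp (-t) := by ring

/-- Equilibration of the mean-field ODE towards the Poisson distribution:
`W₁(p(t), p*) ≤ 2 μ e^{-t}`. -/
theorem meanfield_convergence_to_poisson (μ : ℕ) (hμ : 1 ≤ μ) (p : ℝ → ℕ → ℝ)
    (hode : ∀ t ∈ Set.Ici (0 : ℝ), ∀ n : ℕ,
      HasDerivWithinAt (fun s => p s n) (gen μ (p t) n) (Set.Ici 0) t)
    (hV : ∀ t ∈ Set.Ici (0 : ℝ), memV μ (p t)) :
    ∀ t ∈ Set.Ici (0 : ℝ),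
      W1nat (seqMeas (p t)) (poissonMeas μ) ≤ ENNReal.ofReal (2 * μ * Real.exp (-t)) := by
  exact meanfield_convergence_to_poisson_general (Nat.cast_pos.2 hμ) p hode hV

end
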